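/- Let G be a strongly uncontrollable graph on n vertices and let G̃ be the graph on n+2 vertices obtained from G by adding two new vertices, non-adjacent to each other, each adjacent to every vertex of G. Then G̃ is strongly uncontrollable if and only if neither n − 2 nor n is an eigenvalue of L(G). -/

import Mathlib

open Classical Matrix

noncomputable def lap {n : ℕ} (G : SimpleGraph (Fin n)) : Matrix (Fin n) (Fin n) ℝ :=
  Matrix.of fun i j =>
    (if i = j then ((G.neighborSet i).ncard : ℝ) else 0) - (if G.Adj i j then 1 else 0)

def IsTwin {n : ℕ} (G : SimpleGraph (Fin n)) (u v : Fin n) : Prop :=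
  u ≠ v ∧ G.neighborSet u \ {v} = G.neighborSet v \ {u}

def IsEigenvalue {n : ℕ} (M : Matrix (Fin n) (Fin n) ℝ) (μ : ℝ) : Prop :=
  ∃ x : Fin n → ℝ, x ≠ 0 ∧ M.mulVec x = μ • x

def HasSimpleSpectrum {n : ℕ} (M : Matrix (Fin n) (Fin n) ℝ) : Prop :=
  ∃ μ : Fin n → ℝ, Function.Injective μ ∧ ∀ i, IsEigenvalue M (μ i)

def Controllable {n : ℕ} (M : Matrix (Fin n) (Fin n) ℝ) (b : Fin n → ℝ) : Prop :=
  Submodule.span ℝ (Set.range fun k : Fin n => (M ^ (k : ℕ)).mulVec b) = ⊤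

def StronglyUncontrollable {n : ℕ} (G : SimpleGraph (Fin n)) : Prop :=
  G.Connected ∧ HasSimpleSpectrum (lap G) ∧
    ∀ b : Fin n → ℝ, (∀ i, b i = 0 ∨ b i = 1) → ¬ Controllable (lap G) b

def Pmat {n k : ℕ} (c : Fin n → Fin k) : Matrix (Fin n) (Fin k) ℝ :=
  Matrix.of fun i j => if c i = j then 1 else 0

def IsAEP {n k : ℕ} (G : SimpleGraph (Fin n)) (c : Fin n → Fin k) : Prop :=
  ∀ i j : Fin k, i ≠ j → ∀ x y : Fin n, c x = i → c y = i →
    (G.neighborSet x ∩ {z | c z = j}).ncard = (G.neighborSet y ∩ {z | c z = j}).ncard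

noncomputable def quotLap {n k : ℕ} (G : SimpleGraph (Fin n)) (c : Fin n → Fin k) :
    Matrix (Fin k) (Fin k) ℝ :=
  ((Pmat c)ᵀ * Pmat c)⁻¹ * (Pmat c)ᵀ * lap G * Pmat c

def IsQuotAEP {k m : ℕ} (Lq : Matrix (Fin k) (Fin k) ℝ) (r : Fin k → Fin m) : Prop :=
  ∀ a b : Fin m, a ≠ b → ∀ C C' : Fin k, r C = a → r C' = a →
    ∑ C'' ∈ Finset.univ.filter (fun C'' => r C'' = b), Lq C C'' =
      ∑ C'' ∈ Finset.univ.filter (fun C'' => r C'' = b), Lq C' C''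

def IsGraphAut {n : ℕ} (G : SimpleGraph (Fin n)) (σ : Equiv.Perm (Fin n)) : Prop :=
  ∀ x y, G.Adj x y ↔ G.Adj (σ x) (σ y)

def joinOne {n : ℕ} (G : SimpleGraph (Fin n)) : SimpleGraph (Fin (n + 1)) where
  Adj x y := x ≠ y ∧ ((x : ℕ) = n ∨ (y : ℕ) = n ∨
    ∃ (hx : (x : ℕ) < n) (hy : (y : ℕ) < n), G.Adj ⟨x, hx⟩ ⟨y, hy⟩)
  symm := by
    constructor
    rintro x y ⟨hxy, h⟩
    refine ⟨hxy.symm, ?_⟩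
    rcases h with h | h | ⟨hx, hy, h⟩
    exacts [Or.inr (Or.inl h), Or.inl h, Or.inr (Or.inr ⟨hy, hx, h.symm⟩)]
  loopless := ⟨fun x h => h.1 rfl⟩

def joinTwo {n : ℕ} (G : SimpleGraph (Fin n)) : SimpleGraph (Fin (n + 2)) where
  Adj x y := x ≠ y ∧ (((x : ℕ) < n ∧ n ≤ (y : ℕ)) ∨ ((y : ℕ) < n ∧ n ≤ (x : ℕ)) ∨
    ∃ (hx : (x : ℕ) < n) (hy : (y : ℕ) < n), G.Adj ⟨x, hx⟩ ⟨y, hy⟩)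
  symm := by
    constructor
    rintro x y ⟨hxy, h⟩
    refine ⟨hxy.symm, ?_⟩
    rcases h with h | h | ⟨hx, hy, h⟩
    exacts [Or.inr (Or.inl h), Or.inl h, Or.inr (Or.inr ⟨hy, hx, h.symm⟩)]
  loopless := ⟨fun x h => h.1 rfl⟩

def addPendant {n : ℕ} (G : SimpleGraph (Fin n)) (v : Fin n) : SimpleGraph (Fin (n + 1)) where
  Adj x y := ((x : ℕ) = n ∧ (y : ℕ) = (v : ℕ)) ∨ ((y : ℕ) = n ∧ (x : ℕ) = (v : ℕ)) ∨
    ∃ (hx : (x : ℕ) < n) (hy : (y : ℕ) < n), G.Adj ⟨x, hx⟩ ⟨y, hy⟩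
  symm := by
    constructor
    rintro x y (h | h | ⟨hx, hy, h⟩)
    exacts [Or.inr (Or.inl h), Or.inl h, Or.inr (Or.inr ⟨hy, hx, h.symm⟩)]
  loopless := by
    constructor
    intro x h
    have hv := v.isLt
    rcases h with ⟨h1, h2⟩ | ⟨h1, h2⟩ | ⟨hx, hy, h⟩
    · omega
    · omega
    · exact G.irrefl h

lemma lap_mulVec {n : ℕ} (G : SimpleGraph (Fin n)) (x : Fin n → ℝ) (i : Fin n) :
    (lap G).mulVec x i = ∑ j, if G.Adj i j then x i - x j else 0 := by
  have hc : ((G.neighborSet i).ncard : ℝ) = ∑ j, if G.Adj i j then (1 : ℝ) else 0 := by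
    rw [Set.ncard_eq_toFinset_card', Finset.sum_boole]
    congr 2
    ext j
    simp
  simp only [Matrix.mulVec, dotProduct, lap, Matrix.of_apply, sub_mul, ite_mul, zero_mul, one_mul,
    Finset.sum_sub_distrib, Finset.sum_ite_eq, Finset.mem_univ, if_true]
  rw [hc, Finset.sum_mul, ← Finset.sum_sub_distrib]
  refine Finset.sum_congr rfl fun j _ => ?_
  split_ifs <;> ring

lemma lap_symm {n : ℕ} (G : SimpleGraph (Fin n)) : (lap G)ᵀ = lap G := by
  ext i j
  simp only [lap, Matrix.transpose_apply, Matrix.of_apply, G.adj_comm j i]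
  by_cases h : i = j
  · subst h; rfl
  · simp [h, Ne.symm h]

lemma lap_one {n : ℕ} (G : SimpleGraph (Fin n)) : (lap G).mulVec (fun _ => 1) = 0 := by
  ext i
  rw [lap_mulVec]
  simp

lemma dot_symm {n : ℕ} {M : Matrix (Fin n) (Fin n) ℝ} (hM : Mᵀ = M) (x y : Fin n → ℝ) :
    x ⬝ᵥ M.mulVec y = M.mulVec x ⬝ᵥ y := by
  rw [Matrix.dotProduct_mulVec, ← Matrix.mulVec_transpose, hM]

lemma dot_pow {n : ℕ} {M : Matrix (Fin n) (Fin n) ℝ} (hM : Mᵀ = M) (x y : Fin n → ℝ) (μ : ℝ)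
    (hx : M.mulVec x = μ • x) (k : ℕ) : x ⬝ᵥ (M ^ k).mulVec y = μ ^ k * (x ⬝ᵥ y) := by
  induction k with
  | zero => simp
  | succ k ih =>
    rw [pow_succ', ← Matrix.mulVec_mulVec, dot_symm hM, hx, smul_dotProduct, ih, smul_eq_mul]
    ring

lemma not_controllable_of {n : ℕ} {M : Matrix (Fin n) (Fin n) ℝ} (hM : Mᵀ = M)
    (x b : Fin n → ℝ) (μ : ℝ) (hx : M.mulVec x = μ • x) (h0 : x ≠ 0) (hb : x ⬝ᵥ b = 0) :
    ¬ Controllable M b := by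
  intro h
  have hle : Submodule.span ℝ (Set.range fun k : Fin n => (M ^ (k : ℕ)).mulVec b) ≤
      LinearMap.ker (dotProductBilin ℝ ℝ x) := by
    rw [Submodule.span_le]
    rintro _ ⟨k, rfl⟩
    simp [dot_pow hM x b μ hx, hb]
  rw [h] at hle
  have : x ∈ LinearMap.ker (dotProductBilin ℝ ℝ x) := hle trivial
  simp at this
  exact h0 this

lemma exists_basis {n : ℕ} {M : Matrix (Fin n) (Fin n) ℝ} (μ : Fin n → ℝ)
    (hi : Function.Injective μ) (he : ∀ i, IsEigenvalue M (μ i)) :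
    ∃ v : Module.Basis (Fin n) ℝ (Fin n → ℝ), ∀ i, M.mulVec (v i) = μ i • v i := by
  choose v h0 hv using he
  have hl : LinearIndependent ℝ v := by
    apply Module.End.eigenvectors_linearIndependent' (Matrix.toLin' M) μ hi
    intro i
    rw [Module.End.hasEigenvector_iff, Module.End.mem_eigenspace_iff]
    exact ⟨by simpa using hv i, h0 i⟩
  refine ⟨basisOfLinearIndependentOfCardEqFinrank' v hl (by simp), fun i => by simpa using hv i⟩

lemma repr_eig {n : ℕ} {M : Matrix (Fin n) (Fin n) ℝ} {μ : Fin n → ℝ}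
    (v : Module.Basis (Fin n) ℝ (Fin n → ℝ)) (hv : ∀ i, M.mulVec (v i) = μ i • v i)
    (x : Fin n → ℝ) (a : ℝ) (hx : M.mulVec x = a • x) (i : Fin n) (h : v.repr x i ≠ 0) :
    μ i = a := by
  have h1 : M.mulVec x = ∑ j, (v.repr x j * μ j) • v j := by
    conv_lhs => rw [← v.sum_repr x]
    rw [Matrix.mulVec_sum]
    refine Finset.sum_congr rfl fun j _ => ?_
    rw [Matrix.mulVec_smul, hv, smul_smul]
  have h2 := congrArg (fun y => v.repr y i) h1
  simp only [v.repr_sum_self, hx, map_smul, Finsupp.smul_apply, smul_eq_mul] at h2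
  apply mul_left_cancel₀ h
  rw [← h2]; ring

lemma exists_eig {n : ℕ} {M : Matrix (Fin n) (Fin n) ℝ} (μ : Fin n → ℝ)
    (hi : Function.Injective μ) (he : ∀ i, IsEigenvalue M (μ i)) (a : ℝ) (ha : IsEigenvalue M a) :
    ∃ i, μ i = a := by
  obtain ⟨v, hv⟩ := exists_basis μ hi he
  obtain ⟨x, h0, hx⟩ := ha
  by_contra! hc
  apply h0
  rw [← v.sum_repr x]
  refine Finset.sum_eq_zero fun i _ => ?_
  by_contra h
  refine hc i (repr_eig v hv x a hx i fun h' => h (by rw [h', zero_smul]))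

lemma simple_line {n : ℕ} {M : Matrix (Fin n) (Fin n) ℝ} (hs : HasSimpleSpectrum M)
    (x y : Fin n → ℝ) (a : ℝ) (hx : M.mulVec x = a • x) (hy : M.mulVec y = a • y) (h0 : y ≠ 0) :
    ∃ c : ℝ, x = c • y := by
  obtain ⟨μ, hi, he⟩ := hs
  obtain ⟨i, rfl⟩ := exists_eig μ hi he a ⟨y, h0, hy⟩
  obtain ⟨v, hv⟩ := exists_basis μ hi he
  have key : ∀ z : Fin n → ℝ, M.mulVec z = μ i • z → z = v.repr z i • v i := by
    intro z hz
    conv_lhs => rw [← v.sum_repr z]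
    refine Finset.sum_eq_single i (fun j _ hj => ?_) (by simp)
    by_contra h
    exact hj (hi (repr_eig v hv z _ hz j fun h' => h (by rw [h', zero_smul])))
  have hy0 : v.repr y i ≠ 0 := by
    intro h
    apply h0
    rw [key y hy, h, zero_smul]
  refine ⟨v.repr x i / v.repr y i, ?_⟩
  have h1 : (v.repr x i / v.repr y i) • y = (v.repr x i / v.repr y i) • (v.repr y i • v i) :=
    congrArg _ (key y hy)
  rw [h1, smul_smul, div_mul_cancel₀ _ hy0]
  exact key x hx

lemma exists_eig_orth {n : ℕ} {M : Matrix (Fin n) (Fin n) ℝ} (hM : Mᵀ = M)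
    (hs : HasSimpleSpectrum M) (b : Fin n → ℝ) (hb : ¬ Controllable M b) :
    ∃ (x : Fin n → ℝ) (a : ℝ), x ≠ 0 ∧ M.mulVec x = a • x ∧ x ⬝ᵥ b = 0 := by
  obtain ⟨μ, hi, he⟩ := hs
  obtain ⟨v, hv⟩ := exists_basis μ hi he
  obtain ⟨f, hf0, hf⟩ := Submodule.exists_le_ker_of_lt_top _ (lt_top_iff_ne_top.2 hb)
  by_contra! hc
  -- f as a vector
  let y : Fin n → ℝ := fun i => f (Pi.single i 1)
  have hfy : ∀ z, f z = y ⬝ᵥ z := by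
    intro z
    conv_lhs => rw [← Finset.univ_sum_single z]
    rw [map_sum]
    refine Finset.sum_congr rfl fun i _ => ?_
    have : Pi.single i (z i) = z i • (Pi.single i 1 : Fin n → ℝ) := by
      rw [← Pi.single_smul]; simp
    rw [this, map_smul, smul_eq_mul, mul_comm]
  have hz : (fun i => v.repr y i * (v i ⬝ᵥ b)) = 0 := by
    apply Matrix.eq_zero_of_forall_pow_sum_mul_pow_eq_zero hi
    intro k
    have h1 : f ((M ^ (k : ℕ)).mulVec b) = 0 := hf (Submodule.subset_span ⟨k, rfl⟩)
    rw [hfy] at h1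
    nth_rewrite 1 [← v.sum_repr y] at h1
    rw [sum_dotProduct] at h1
    rw [← h1]
    refine Finset.sum_congr rfl fun i _ => ?_
    rw [smul_dotProduct, dot_pow hM _ _ _ (hv i), smul_eq_mul]
    ring
  have hy : y = 0 := by
    rw [← v.sum_repr y]
    refine Finset.sum_eq_zero fun i _ => ?_
    have h2 := congrFun hz i
    have h3 := hc (v i) (μ i) (v.ne_zero i) (hv i)
    simp only [Pi.zero_apply, mul_eq_zero] at h2
    rw [h2.resolve_right h3, zero_smul]
  apply hf0
  ext z
  simp [hfy, hy]

lemma sum_zero_of {n : ℕ} (G : SimpleGraph (Fin n)) (x : Fin n → ℝ) (a : ℝ)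
    (hx : (lap G).mulVec x = a • x) (ha : a ≠ 0) : ∑ i, x i = 0 := by
  have h := dot_symm (lap_symm G) x (fun _ => 1)
  rw [lap_one, hx, dotProduct_zero, smul_dotProduct, smul_eq_mul] at h
  have := (mul_eq_zero.1 h.symm).resolve_left ha
  simpa [dotProduct] using this

lemma lap_nonneg {n : ℕ} (G : SimpleGraph (Fin n)) (a : ℝ) (ha : IsEigenvalue (lap G) a) :
    0 ≤ a := by
  obtain ⟨x, h0, hx⟩ := ha
  have h1 : x ⬝ᵥ (lap G).mulVec x = ∑ i, ∑ j, if G.Adj i j then x i * (x i - x j) else 0 := by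
    simp only [dotProduct, lap_mulVec, Finset.mul_sum, mul_ite, mul_zero]
  have h2 : x ⬝ᵥ (lap G).mulVec x = ∑ i, ∑ j, if G.Adj i j then x j * (x j - x i) else 0 := by
    rw [h1, Finset.sum_comm]
    simp only [G.adj_comm]
  have h3 : 0 ≤ x ⬝ᵥ (lap G).mulVec x + x ⬝ᵥ (lap G).mulVec x := by
    nth_rewrite 1 [h1]
    rw [h2]
    simp only [← Finset.sum_add_distrib]
    refine Finset.sum_nonneg fun i _ => Finset.sum_nonneg fun j _ => ?_
    split_ifs
    · nlinarith [sq_nonneg (x i - x j)]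
    · simp
  rw [hx, dotProduct_smul, smul_eq_mul] at h3
  have h4 : 0 < x ⬝ᵥ x := by
    have : x ⬝ᵥ x ≠ 0 := fun h => h0 (dotProduct_self_eq_zero.1 h)
    have h5 : 0 ≤ x ⬝ᵥ x := Finset.sum_nonneg fun i _ => mul_self_nonneg _
    positivity
  by_contra! h
  nlinarith

lemma join_mulVec {n : ℕ} (G : SimpleGraph (Fin n)) (x : Fin n → ℝ) (c d : ℝ) :
    (lap (joinTwo G)).mulVec (Fin.append x ![c, d]) =
      Fin.append (fun i => (lap G).mulVec x i + 2 * x i - c - d)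
        ![n * c - ∑ i, x i, n * d - ∑ i, x i] := by
  have a1 : ∀ i j, (joinTwo G).Adj (Fin.castAdd 2 i) (Fin.castAdd 2 j) ↔ G.Adj i j := by
    intro i j
    have h1 := i.isLt
    have h2 := j.isLt
    constructor
    · rintro ⟨_, h | h | ⟨_, _, h⟩⟩
      · simp at h; omega
      · simp at h; omega
      · exact h
    · intro h
      exact ⟨fun h' => G.ne_of_adj h (Fin.castAdd_injective n 2 h'), Or.inr (Or.inr ⟨h1, h2, h⟩)⟩
  have a2 : ∀ i k, (joinTwo G).Adj (Fin.castAdd 2 i) (Fin.natAdd n k) := by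
    intro i k
    have h1 := i.isLt
    refine ⟨fun h => ?_, Or.inl ⟨by simp, by simp⟩⟩
    have := congrArg Fin.val h
    simp at this
    omega
  have a3 : ∀ k l, ¬ (joinTwo G).Adj (Fin.natAdd n k) (Fin.natAdd n l) := by
    rintro k l ⟨_, h | h | ⟨h, _⟩⟩ <;> simp at h
  funext s
  rw [lap_mulVec, Fin.sum_univ_add]
  induction s using Fin.addCases with
  | left i =>
    simp only [Fin.append_left, Fin.append_right, a1, a2, if_true, Fin.sum_univ_two,
      lap_mulVec, Matrix.cons_val_zero, Matrix.cons_val_one]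
    ring
  | right k =>
    simp only [Fin.append_left, Fin.append_right, (a2 _ _).symm, a3, if_true, if_false,
      Finset.sum_sub_distrib, Finset.sum_const_zero, add_zero]
    fin_cases k <;> simp

lemma join_eig {n : ℕ} (G : SimpleGraph (Fin n)) (x : Fin n → ℝ) (a : ℝ) (ha : a ≠ 0)
    (hx : (lap G).mulVec x = a • x) :
    (lap (joinTwo G)).mulVec (Fin.append x ![0, 0]) = (a + 2) • Fin.append x ![0, 0] := by
  rw [join_mulVec, sum_zero_of G x a hx ha, hx]
  funext s
  induction s using Fin.addCases with
  | left i => simp; ring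
  | right k => fin_cases k <;> simp

lemma join_eig_n {n : ℕ} (G : SimpleGraph (Fin n)) :
    (lap (joinTwo G)).mulVec (Fin.append 0 ![1, -1]) = (n : ℝ) • Fin.append 0 ![1, -1] := by
  rw [join_mulVec]
  funext s
  induction s using Fin.addCases with
  | left i => simp
  | right k => fin_cases k <;> simp

lemma join_eig_n2 {n : ℕ} (G : SimpleGraph (Fin n)) :
    (lap (joinTwo G)).mulVec (Fin.append (fun _ => 2) ![-n, -n]) =
      ((n : ℝ) + 2) • Fin.append (fun _ => 2) ![-(n : ℝ), -n] := by
  rw [join_mulVec]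
  funext s
  induction s using Fin.addCases with
  | left i => simp [lap_mulVec]; ring
  | right k => fin_cases k <;> simp <;> ring

lemma app_ne {n : ℕ} (x : Fin n → ℝ) (c d : ℝ) (h : x ≠ 0 ∨ c ≠ 0) :
    (Fin.append x ![c, d] : Fin (n + 2) → ℝ) ≠ 0 := by
  intro h0
  rcases h with h | h
  · apply h
    funext i
    simpa using congrFun h0 (Fin.castAdd 2 i)
  · apply h
    simpa using congrFun h0 (Fin.natAdd n 0)

lemma joinTwo_adj {n : ℕ} (G : SimpleGraph (Fin n)) (i : Fin n) (k : Fin 2) :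
    (joinTwo G).Adj (Fin.castAdd 2 i) (Fin.natAdd n k) := by
  have h1 := i.isLt
  refine ⟨fun h => ?_, Or.inl ⟨by simp, by simp⟩⟩
  have := congrArg Fin.val h
  simp at this
  omega

lemma joinTwo_connected {n : ℕ} (G : SimpleGraph (Fin n)) (i₀ : Fin n) :
    (joinTwo G).Connected := by
  rw [SimpleGraph.connected_iff_exists_forall_reachable]
  refine ⟨Fin.natAdd n 0, fun s => ?_⟩
  induction s using Fin.addCases with
  | left i => exact (joinTwo_adj G i 0).symm.reachable
  | right k => exact (joinTwo_adj G i₀ 0).symm.reachable.trans (joinTwo_adj G i₀ k).reachable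

lemma three_le {n : ℕ} (G : SimpleGraph (Fin n)) (hG : StronglyUncontrollable G) : 3 ≤ n := by
  obtain ⟨hc, hs, hu⟩ := hG
  obtain ⟨i₀⟩ := hc.nonempty
  have hn : 0 < n := i₀.pos
  by_contra! hlt
  let z : Fin n := ⟨0, hn⟩
  obtain ⟨x, a, h0, hx, hb⟩ := exists_eig_orth (lap_symm G) hs (Pi.single z 1)
    (hu _ (fun i => by by_cases h : i = z <;> simp [Pi.single_apply, h]))
  have hz : x z = 0 := by simpa using hb
  by_cases ha : a = 0
  · obtain ⟨c, hcx⟩ := simple_line hs x (fun _ => 1) 0 (by rw [hx, ha]) (by rw [lap_one]; simp)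
      (fun h => one_ne_zero (congrFun h z))
    have : c = 0 := by simpa [hcx] using hz
    apply h0
    rw [hcx, this, zero_smul]
  · have hsum := sum_zero_of G x a hx ha
    apply h0
    clear hx hb hu hs hc
    obtain rfl | rfl : n = 1 ∨ n = 2 := by omega
    · funext i
      rw [Subsingleton.elim i z]
      exact hz
    · rw [Fin.sum_univ_two] at hsum
      have hz' : x 0 = 0 := hz
      funext i
      fin_cases i
      · exact hz'
      · simpa [hz'] using hsum

theorem stmt8 {n : ℕ} (G : SimpleGraph (Fin n)) (hG : StronglyUncontrollable G) :
    StronglyUncontrollable (joinTwo G) ↔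
      (¬ IsEigenvalue (lap G) ((n : ℝ) - 2) ∧ ¬ IsEigenvalue (lap G) (n : ℝ)) := by
  have hn := three_le G hG
  have hnR : (3 : ℝ) ≤ n := by exact_mod_cast hn
  obtain ⟨hc, hs, hu⟩ := hG
  constructor
  · rintro ⟨-, hs', -⟩
    constructor
    · rintro ⟨x, h0, hx⟩
      have h1 := join_eig G x _ (by linarith) hx
      rw [sub_add_cancel] at h1
      obtain ⟨c, h⟩ := simple_line hs' _ _ _ h1 (join_eig_n G) (app_ne _ _ _ (Or.inr one_ne_zero))
      apply h0
      funext i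
      simpa using congrFun h (Fin.castAdd 2 i)
    · rintro ⟨x, h0, hx⟩
      have h1 := join_eig G x _ (by linarith) hx
      obtain ⟨c, h⟩ := simple_line hs' _ _ _ h1 (join_eig_n2 G)
        (app_ne _ _ _ (Or.inr (by linarith)))
      have h2 := congrFun h (Fin.natAdd n 0)
      simp only [Fin.append_right, Pi.smul_apply, Matrix.cons_val_zero, smul_eq_mul] at h2
      have hc0 : c = 0 := (mul_eq_zero.1 h2.symm).resolve_right (by linarith)
      apply h0
      funext i
      simpa [hc0] using congrFun h (Fin.castAdd 2 i)
  · rintro ⟨e1, e2⟩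
    refine ⟨joinTwo_connected G ⟨0, by omega⟩, ?_, ?_⟩
    · obtain ⟨μ, hi, he⟩ := hs
      have hnn : ∀ i, 0 ≤ μ i := fun i => lap_nonneg G _ (he i)
      have hm1 : ∀ i, μ i ≠ n - 2 := fun i h => e1 (h ▸ he i)
      have hm2 : ∀ i, μ i ≠ n := fun i h => e2 (h ▸ he i)
      refine ⟨Fin.append (fun i => if μ i = 0 then 0 else μ i + 2) ![(n : ℝ), n + 2], ?_, ?_⟩
      · have k1 : ∀ i, (if μ i = 0 then 0 else μ i + 2) ≠ (n : ℝ) := by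
          intro i h
          split_ifs at h
          · linarith
          · exact hm1 i (by linarith)
        have k2 : ∀ i, (if μ i = 0 then 0 else μ i + 2) ≠ (n : ℝ) + 2 := by
          intro i h
          split_ifs at h
          · linarith
          · exact hm2 i (by linarith)
        rw [Fin.append_injective_iff]
        refine ⟨?_, ?_, ?_⟩
        · intro i j h
          have := hnn i
          have := hnn j
          apply hi
          dsimp only at h
          split_ifs at h <;> linarith
        · intro k l h
          fin_cases k <;> fin_cases l <;> simp at h ⊢
        · intro i k
          fin_cases k
          · exact k1 i
          · exact k2 i
      · intro s
        induction s using Fin.addCases with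
        | left i =>
          simp only [Fin.append_left]
          split_ifs with h
          · refine ⟨fun _ => 1, fun h => one_ne_zero (congrFun h (Fin.natAdd n 0)), ?_⟩
            rw [lap_one, zero_smul]
          · obtain ⟨x, h0, hx⟩ := he i
            exact ⟨_, app_ne _ _ _ (Or.inl h0), join_eig G x _ h hx⟩
        | right k =>
          simp only [Fin.append_right]
          fin_cases k
          · exact ⟨_, app_ne _ _ _ (Or.inr one_ne_zero), join_eig_n G⟩
          · exact ⟨_, app_ne _ _ _ (Or.inr (by linarith)), join_eig_n2 G⟩
    · intro b hb
      let b' : Fin n → ℝ := fun i => b (Fin.castAdd 2 i)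
      have key : ∃ (x : Fin n → ℝ) (a : ℝ), x ≠ 0 ∧ a ≠ 0 ∧ (lap G).mulVec x = a • x ∧
          x ⬝ᵥ b' = 0 := by
        by_cases hb0 : b' = 0
        · obtain ⟨μ, hi, he⟩ := hs
          have : ∃ i, μ i ≠ 0 := by
            by_contra! h
            have h1 := @hi ⟨0, by omega⟩ ⟨1, by omega⟩ (by rw [h, h])
            simp at h1
          obtain ⟨i, hi0⟩ := this
          obtain ⟨x, h0, hx⟩ := he i
          exact ⟨x, μ i, h0, hi0, hx, by simp [hb0]⟩
        · obtain ⟨x, a, h0, hx, hxb⟩ := exists_eig_orth (lap_symm G) hs b' (hu b' fun i => hb _)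
          refine ⟨x, a, h0, ?_, hx, hxb⟩
          rintro rfl
          obtain ⟨c, rfl⟩ := simple_line hs x (fun _ => 1) 0 hx (by rw [lap_one]; simp)
            (fun h => one_ne_zero (congrFun h ⟨0, by omega⟩))
          have hc0 : c ≠ 0 := by rintro rfl; simp at h0
          rw [smul_dotProduct, smul_eq_mul] at hxb
          have h1 := (mul_eq_zero.1 hxb).resolve_left hc0
          simp only [dotProduct, one_mul] at h1
          have h2 := (Finset.sum_eq_zero_iff_of_nonneg (fun i _ => by
            rcases hb (Fin.castAdd 2 i) with h | h <;> simp [b', h])).1 h1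
          exact hb0 (funext fun i => h2 i (Finset.mem_univ i))
      obtain ⟨x, a, h0, ha, hx, hxb⟩ := key
      refine not_controllable_of (lap_symm _) _ b _ (join_eig G x a ha hx)
        (app_ne _ _ _ (Or.inl h0)) ?_
      rw [dotProduct, Fin.sum_univ_add]
      simpa [dotProduct, b'] using hxb
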